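/- Let p ∈ (1,2), n ∈ ℕ, and a_i = (n/i)^{1/p} for i = 1,…,n. Then there exist constants c_1(p), c_2(p) > 0 depending only on p such that for all x ∈ ℝ^n: c_1(p)·‖x‖_p ≤ (1/n!)∑_{π ∈ S_n} (∑_{i=1}^n |x_i a_{π(i)}|^2)^{1/2} ≤ c_2(p)·‖x‖_p. -/

import Mathlib

open Finset

/-!
By homogeneity `|x i| * a j = ‖x‖_p * (u i / j) ^ (1 / p)` for some `u ≥ 0` with `∑ u i = n`, so
both bounds concern the matrix `z i j = (u i / j) ^ (1 / p)` alone.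

*Upper bound.* From `√(∑ tᵢ²) ≤ 1 + ∑ min tᵢ tᵢ²`, the average is at most
`1 + (1/n) ∑ᵢⱼ min (z i j) (z i j)²`, and the `i`-th row sum is at most
`u i * ∫₀^∞ min (s ^ (-1/p)) (s ^ (-2/p))`, which is finite exactly because `1/p < 1 < 2/p`.

*Lower bound.* Let `N π` count the `i` with `π i ≤ 2 * u i`, that is, with
`z i (π i) ≥ (1/2) ^ (1/p)`; the factor `2` absorbs the rounding in counting integers below a real
number. The mean `S` of `N` is at least `1/2`, and its second moment is at most `S + 2 S²` because
distinct entries of a random permutation are nearly independent. Averaging a quadratic minorant of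
the square root, `√N` has mean at least `S / √(1 + 2 S)`.
-/

open scoped BigOperators

section IntegralComparison

open MeasureTheory Set

theorem integrableOn_Ioi_min_rpow_neg {α β : ℝ} (hα : α < 1) (hβ : 1 < β) :
    IntegrableOn (fun s : ℝ => min (s ^ (-α)) (s ^ (-β))) (Ioi 0) := by
  have hmeas : Measurable (fun s : ℝ => min (s ^ (-α)) (s ^ (-β))) := by fun_prop
  have hnonneg : ∀ s : ℝ, 0 < s → 0 ≤ min (s ^ (-α)) (s ^ (-β)) := fun s hs => by positivity
  have near_zero : IntegrableOn (fun s : ℝ => s ^ (-α)) (Ioc 0 1) :=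
    (intervalIntegrable_iff_integrableOn_Ioc_of_le zero_le_one).1
      (intervalIntegral.intervalIntegrable_rpow' (by linarith))
  have near_top : IntegrableOn (fun s : ℝ => s ^ (-β)) (Ioi 1) :=
    integrableOn_Ioi_rpow_of_lt (by linarith) one_pos
  rw [← Ioc_union_Ioi_eq_Ioi (zero_le_one' ℝ)]
  refine IntegrableOn.union (near_zero.mono' hmeas.aestronglyMeasurable ?_)
    (near_top.mono' hmeas.aestronglyMeasurable ?_)
  · filter_upwards [ae_restrict_mem measurableSet_Ioc] with s hs
    simpa only [Real.norm_of_nonneg (hnonneg s hs.1)] using min_le_left _ _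
  · filter_upwards [ae_restrict_mem measurableSet_Ioi] with s hs
    simpa only [Real.norm_of_nonneg (hnonneg s (one_pos.trans hs))] using min_le_right _ _

theorem antitoneOn_min_rpow_neg {α β : ℝ} (hα : 0 ≤ α) (hβ : 0 ≤ β) :
    AntitoneOn (fun s : ℝ => min (s ^ (-α)) (s ^ (-β))) (Ioi 0) := fun _ hs _ _ hst =>
  min_le_min (Real.rpow_le_rpow_of_nonpos hs hst (neg_nonpos.2 hα))
    (Real.rpow_le_rpow_of_nonpos hs hst (neg_nonpos.2 hβ))

theorem sum_range_le_integral_Ioi_of_antitoneOn {f : ℝ → ℝ} (hf : AntitoneOn f (Ioi 0))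
    (hnonneg : ∀ s ∈ Set.Ioi (0 : ℝ), 0 ≤ f s) (hint : IntegrableOn f (Ioi 0)) (n : ℕ) :
    ∑ i ∈ range n, f (i + 1) ≤ ∫ s in Ioi 0, f s := by
  -- The value of `f` at `0` is arbitrary, so it is replaced by `f 1` before comparing.
  have hupdate : Function.update f 0 (f 1) =ᵐ[volume] f := by
    filter_upwards [compl_mem_ae_iff.2 (measure_singleton (0 : ℝ))] with s hs
    exact Function.update_of_ne hs _ _
  have hint_Ico : IntegrableOn f (Ico 0 n) :=
    ((integrableOn_Ici_iff_integrableOn_Ioi).2 hint).mono_set Ico_subset_Ici_self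
  have hcell : ∀ i ∈ Set.Ico 0 n, ∀ s ∈ Set.Ico (i : ℝ) ↑(i + 1),
      f (i + 1) ≤ Function.update f 0 (f 1) s := fun i _ s hs => by
    have hi : (0 : ℝ) ≤ i := i.cast_nonneg
    rcases (hi.trans hs.1).eq_or_lt with rfl | hs0
    · have : (i : ℝ) = 0 := le_antisymm hs.1 hi
      simp [this]
    · rw [Function.update_of_ne hs0.ne']
      exact hf hs0 (mem_Ioi.2 (by positivity)) (by exact_mod_cast hs.2.le)
  calc ∑ i ∈ range n, f (i + 1)
      ≤ ∫ s in ((0 : ℕ) : ℝ)..n, Function.update f 0 (f 1) s := by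
        rw [Finset.range_eq_Ico]
        refine sum_Ico_le_integral_of_le (f := fun s => f (s + 1)) n.zero_le hcell ?_
        rw [Nat.cast_zero]
        exact hint_Ico.congr_fun_ae (ae_restrict_of_ae hupdate.symm)
    _ = ∫ s in Ioc (0 : ℝ) n, f s := by
        rw [Nat.cast_zero, intervalIntegral.integral_of_le n.cast_nonneg]
        exact integral_congr_ae (ae_restrict_of_ae hupdate)
    _ ≤ ∫ s in Ioi 0, f s :=
        setIntegral_mono_set hint (ae_restrict_of_forall_mem measurableSet_Ioi hnonneg)
          Ioc_subset_Ioi_self.eventuallyLE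

theorem sum_range_div_le_mul_integral_Ioi_of_antitoneOn {f : ℝ → ℝ} (hf : AntitoneOn f (Ioi 0))
    (hnonneg : ∀ s ∈ Set.Ioi (0 : ℝ), 0 ≤ f s) (hint : IntegrableOn f (Ioi 0)) (n : ℕ) {u : ℝ}
    (hu : 0 < u) :
    ∑ i ∈ range n, f ((i + 1) / u) ≤ u * ∫ s in Ioi 0, f s := by
  have hu_inv : 0 < u⁻¹ := inv_pos.2 hu
  simp only [div_eq_inv_mul]
  calc ∑ i ∈ range n, f (u⁻¹ * (i + 1))
      ≤ ∫ s in Ioi 0, f (u⁻¹ * s) := by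
        refine sum_range_le_integral_Ioi_of_antitoneOn (f := fun s => f (u⁻¹ * s)) ?_ ?_ ?_ n
        · exact fun s hs t ht hst => hf (mul_pos hu_inv hs) (mul_pos hu_inv ht)
            (mul_le_mul_of_nonneg_left hst hu_inv.le)
        · exact fun s hs => hnonneg _ (mul_pos hu_inv hs)
        · rwa [integrableOn_Ioi_comp_mul_left_iff f 0 hu_inv, mul_zero]
    _ = u * ∫ s in Ioi 0, f s := by
        rw [integral_comp_mul_left_Ioi f 0 hu_inv, mul_zero, inv_inv, smul_eq_mul]

theorem sum_min_div_rpow_le_mul_integral_Ioi {α β : ℝ} (hα0 : 0 ≤ α) (hα1 : α < 1) (hβ : 1 < β)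
    (n : ℕ) {u : ℝ} (hu : 0 ≤ u) :
    ∑ j : Fin n, min ((u / (j + 1)) ^ α) ((u / (j + 1)) ^ β) ≤
      u * ∫ s in Ioi (0 : ℝ), min (s ^ (-α)) (s ^ (-β)) := by
  have hβ0 : 0 < β := by linarith
  rcases hu.eq_or_lt with rfl | hu
  · simp [Real.zero_rpow hβ0.ne', Real.zero_rpow_nonneg]
  have hrpow (j : ℕ) (γ : ℝ) : (u / (j + 1)) ^ γ = ((j + 1) / u) ^ (-γ) := by
    rw [Real.rpow_neg (by positivity), ← Real.inv_rpow (by positivity), inv_div]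
  simp only [hrpow]
  rw [Fin.sum_univ_eq_sum_range
    (fun j : ℕ => min (((j + 1) / u) ^ (-α)) (((j + 1) / u) ^ (-β)))]
  exact sum_range_div_le_mul_integral_Ioi_of_antitoneOn
    (antitoneOn_min_rpow_neg hα0 hβ0.le) (fun s (hs : 0 < s) => by positivity)
    (integrableOn_Ioi_min_rpow_neg hα1 hβ) n hu

end IntegralComparison

theorem sqrt_sum_sq_le_one_add_sum_min {ι : Type*} (s : Finset ι) {t : ι → ℝ}
    (ht : ∀ i ∈ s, 0 ≤ t i) :
    √(∑ i ∈ s, t i ^ 2) ≤ 1 + ∑ i ∈ s, min (t i) (t i ^ 2) := by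
  have hmin : ∀ i ∈ s, 0 ≤ min (t i) (t i ^ 2) := fun i hi => le_min (ht i hi) (sq_nonneg _)
  have hterm : ∀ i ∈ s, t i ^ 2 ≤ min (t i) (t i ^ 2) ^ 2 + 2 * min (t i) (t i ^ 2) :=
    fun i hi => by
      have := ht i hi
      rcases min_cases (t i) (t i ^ 2) with h | h <;> rw [h.1] <;> nlinarith [sq_nonneg (t i ^ 2)]
  refine Real.sqrt_le_iff.2 ⟨add_nonneg zero_le_one (Finset.sum_nonneg hmin), ?_⟩
  calc ∑ i ∈ s, t i ^ 2
      ≤ ∑ i ∈ s, min (t i) (t i ^ 2) ^ 2 + 2 * ∑ i ∈ s, min (t i) (t i ^ 2) := by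
        rw [Finset.mul_sum, ← Finset.sum_add_distrib]
        exact Finset.sum_le_sum hterm
    _ ≤ (∑ i ∈ s, min (t i) (t i ^ 2)) ^ 2 + 2 * ∑ i ∈ s, min (t i) (t i ^ 2) := by
        gcongr
        exact Finset.sum_sq_le_sq_sum_of_nonneg hmin
    _ ≤ (1 + ∑ i ∈ s, min (t i) (t i ^ 2)) ^ 2 := by linarith

theorem three_mul_div_sub_div_cube_le_two_mul_sqrt {t r : ℝ} (ht : 0 ≤ t) (hr : 0 < r) :
    3 * t / r - t ^ 2 / r ^ 3 ≤ 2 * √t := by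
  -- With `q = √t / r` this is `0 ≤ q * (q - 1) ^ 2 * (q + 2)`.
  obtain ⟨q, hq, rfl⟩ : ∃ q, 0 ≤ q ∧ t = (r * q) ^ 2 :=
    ⟨√t / r, by positivity, by rw [mul_div_cancel₀ _ hr.ne', Real.sq_sqrt ht]⟩
  rw [Real.sqrt_sq (by positivity)]
  have hpoly : 0 ≤ r * (q * (q - 1) ^ 2 * (q + 2)) := by positivity
  calc 3 * (r * q) ^ 2 / r - ((r * q) ^ 2) ^ 2 / r ^ 3
      = 2 * (r * q) - r * (q * (q - 1) ^ 2 * (q + 2)) := by field_simp; ring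
    _ ≤ 2 * (r * q) := by linarith

section PermutationAverage

variable {ι : Type*} [Fintype ι] [DecidableEq ι]

theorem expect_perm_apply (f : ι → ℝ) (i : ι) :
    𝔼 π : Equiv.Perm ι, f (π i) = 𝔼 j, f j := by
  have : Nonempty ι := ⟨i⟩
  calc 𝔼 π : Equiv.Perm ι, f (π i)
      = 𝔼 _k : ι, 𝔼 π : Equiv.Perm ι, f (π i) := (Fintype.expect_const _).symm
    _ = 𝔼 k, 𝔼 π : Equiv.Perm ι, f (π k) := Finset.expect_congr rfl fun k _ =>
        Fintype.expect_equiv (Equiv.mulRight (Equiv.swap i k)) _ _ fun π => by simp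
    _ = 𝔼 π : Equiv.Perm ι, 𝔼 k, f (π k) := Finset.expect_comm _ _ _
    _ = 𝔼 _π : Equiv.Perm ι, 𝔼 j, f j := Finset.expect_congr rfl fun π _ =>
        Fintype.expect_equiv π _ _ fun _ => rfl
    _ = 𝔼 j, f j := Fintype.expect_const _

theorem expect_perm_apply_mul_apply_le {f g : ι → ℝ} (hfg : ∀ j, 0 ≤ f j * g j) {i k : ι}
    (hik : i ≠ k) :
    (Fintype.card ι - 1) * 𝔼 π : Equiv.Perm ι, f (π i) * g (π k) ≤
      Fintype.card ι * ((𝔼 j, f j) * 𝔼 j, g j) := by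
  have hswap : ∀ l ∈ univ.erase i, 𝔼 π : Equiv.Perm ι, f (π i) * g (π l) =
      𝔼 π : Equiv.Perm ι, f (π i) * g (π k) := fun l hl =>
    Fintype.expect_equiv (Equiv.mulRight (Equiv.swap k l)) _ _ fun π => by
      simp [Equiv.swap_apply_of_ne_of_ne hik (Finset.ne_of_mem_erase hl).symm]
  have hcard : (#(univ.erase i) : ℝ) = Fintype.card ι - 1 := by
    rw [Finset.card_erase_of_mem (mem_univ i), Finset.card_univ,
      Nat.cast_pred (Fintype.card_pos_iff.2 ⟨i⟩)]
  calc (Fintype.card ι - 1) * 𝔼 π : Equiv.Perm ι, f (π i) * g (π k)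
      = ∑ l ∈ univ.erase i, 𝔼 π : Equiv.Perm ι, f (π i) * g (π l) := by
        rw [Finset.sum_congr rfl hswap, Finset.sum_const, nsmul_eq_mul, hcard]
    _ ≤ ∑ l, 𝔼 π : Equiv.Perm ι, f (π i) * g (π l) := by
        rw [← Finset.add_sum_erase _ _ (mem_univ i)]
        exact le_add_of_nonneg_left (Finset.expect_nonneg fun π _ => hfg (π i))
    _ = (𝔼 π : Equiv.Perm ι, f (π i)) * ∑ j, g j := by
        rw [← Finset.expect_sum_comm, Finset.expect_mul]
        refine Finset.expect_congr rfl fun π _ => ?_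
        rw [← Finset.mul_sum, Equiv.sum_comp π g]
    _ = Fintype.card ι * ((𝔼 j, f j) * 𝔼 j, g j) := by
        rw [expect_perm_apply, ← Fintype.card_mul_expect g]
        ring

theorem expect_perm_apply_mul_apply_le_two_mul {f g : ι → ℝ} (hf : ∀ j, 0 ≤ f j)
    (hg : ∀ j, 0 ≤ g j) {i k : ι} (hik : i ≠ k) :
    𝔼 π : Equiv.Perm ι, f (π i) * g (π k) ≤ 2 * ((𝔼 j, f j) * 𝔼 j, g j) := by
  have hcard : (2 : ℝ) ≤ Fintype.card ι := by
    exact_mod_cast Fintype.one_lt_card_iff.2 ⟨i, k, hik⟩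
  have hmean : 0 ≤ (𝔼 j, f j) * 𝔼 j, g j :=
    mul_nonneg (Finset.expect_nonneg fun j _ => hf j) (Finset.expect_nonneg fun j _ => hg j)
  have hcov := expect_perm_apply_mul_apply_le (fun j => mul_nonneg (hf j) (hg j)) hik
  refine le_of_mul_le_mul_left (hcov.trans ?_) (by linarith : (0 : ℝ) < Fintype.card ι - 1)
  linarith [mul_nonneg hmean (sub_nonneg.2 hcard)]

theorem expect_perm_sum_apply (T : ι → ι → ℝ) :
    𝔼 π : Equiv.Perm ι, ∑ i, T i (π i) = ∑ i, 𝔼 j, T i j := by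
  rw [Finset.expect_sum_comm]
  exact Finset.sum_congr rfl fun i _ => expect_perm_apply (T i) i

theorem expect_perm_sq_sum_apply_le {T : ι → ι → ℝ} (hT0 : ∀ i j, 0 ≤ T i j)
    (hT1 : ∀ i j, T i j ≤ 1) :
    𝔼 π : Equiv.Perm ι, (∑ i, T i (π i)) ^ 2 ≤
      ∑ i, 𝔼 j, T i j + 2 * (∑ i, 𝔼 j, T i j) ^ 2 := by
  have hpair : ∀ i k, 𝔼 π : Equiv.Perm ι, T i (π i) * T k (π k) ≤
      (if i = k then 𝔼 j, T i j else 0) + 2 * ((𝔼 j, T i j) * 𝔼 j, T k j) := fun i k => by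
    by_cases hik : i = k
    · subst hik
      rw [if_pos rfl, ← expect_perm_apply (T i) i]
      refine le_add_of_le_of_nonneg (Finset.expect_le_expect fun π _ =>
        mul_le_of_le_one_right (hT0 _ _) (hT1 _ _)) ?_
      rw [expect_perm_apply]
      exact mul_nonneg zero_le_two (mul_self_nonneg _)
    · rw [if_neg hik, zero_add]
      exact expect_perm_apply_mul_apply_le_two_mul (hT0 i) (hT0 k) hik
  calc 𝔼 π : Equiv.Perm ι, (∑ i, T i (π i)) ^ 2
      = ∑ i, ∑ k, 𝔼 π : Equiv.Perm ι, T i (π i) * T k (π k) := by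
        simp only [sq, Finset.sum_mul_sum, Finset.expect_sum_comm]
    _ ≤ ∑ i, ∑ k, ((if i = k then 𝔼 j, T i j else 0) + 2 * ((𝔼 j, T i j) * 𝔼 j, T k j)) :=
        Finset.sum_le_sum fun i _ => Finset.sum_le_sum fun k _ => hpair i k
    _ = ∑ i, 𝔼 j, T i j + 2 * (∑ i, 𝔼 j, T i j) ^ 2 := by
        simp only [Finset.sum_add_distrib, Finset.sum_ite_eq, mem_univ, if_true,
          ← Finset.mul_sum, sq, Finset.sum_mul_sum]

theorem div_sqrt_le_expect_perm_sqrt_sum_apply {T : ι → ι → ℝ} (hT0 : ∀ i j, 0 ≤ T i j)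
    (hT1 : ∀ i j, T i j ≤ 1) :
    (∑ i, 𝔼 j, T i j) / √(1 + 2 * ∑ i, 𝔼 j, T i j) ≤
      𝔼 π : Equiv.Perm ι, √(∑ i, T i (π i)) := by
  set S := ∑ i, 𝔼 j, T i j with hS
  have hS0 : 0 ≤ S := Finset.sum_nonneg fun i _ => Finset.expect_nonneg fun j _ => hT0 i j
  set r := √(1 + 2 * S)
  have hr0 : 0 < r := Real.sqrt_pos.2 (by linarith)
  have hr2 : r ^ 2 = 1 + 2 * S := Real.sq_sqrt (by linarith)
  have hsecond : 𝔼 π : Equiv.Perm ι, (∑ i, T i (π i)) ^ 2 ≤ S * r ^ 2 :=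
    (expect_perm_sq_sum_apply_le hT0 hT1).trans_eq (by rw [hr2]; ring)
  have htangent : 𝔼 π : Equiv.Perm ι,
      (3 * (∑ i, T i (π i)) / r - (∑ i, T i (π i)) ^ 2 / r ^ 3) ≤
        𝔼 π : Equiv.Perm ι, 2 * √(∑ i, T i (π i)) :=
    Finset.expect_le_expect fun π _ => three_mul_div_sub_div_cube_le_two_mul_sqrt
      (Finset.sum_nonneg fun i _ => hT0 i (π i)) hr0
  rw [Finset.expect_sub_distrib, ← Finset.expect_div, ← Finset.expect_div, ← Finset.mul_expect,
    ← Finset.mul_expect, expect_perm_sum_apply, ← hS] at htangent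
  have hmain : 2 * (S / r) ≤
      3 * S / r - (𝔼 π : Equiv.Perm ι, (∑ i, T i (π i)) ^ 2) / r ^ 3 :=
    calc 2 * (S / r) = 3 * S / r - S * r ^ 2 / r ^ 3 := by field_simp; ring
      _ ≤ _ := by gcongr
  linarith

/-- The average, over all permutations `π`, of the Euclidean norm of the generalized diagonal
`(z i (π i))ᵢ` of a square matrix `z`. -/
noncomputable def permL2Average (z : ι → ι → ℝ) : ℝ :=
  𝔼 π : Equiv.Perm ι, √(∑ i, z i (π i) ^ 2)

theorem permL2Average_eq_mul_of_abs_eq {c : ℝ} (hc : 0 ≤ c) {z w : ι → ι → ℝ}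
    (h : ∀ i j, |z i j| = c * |w i j|) : permL2Average z = c * permL2Average w := by
  have hsq : ∀ i j, z i j ^ 2 = c ^ 2 * w i j ^ 2 := fun i j => by
    rw [← sq_abs, h, mul_pow, sq_abs]
  simp only [permL2Average, hsq, ← Finset.mul_sum, Real.sqrt_mul (sq_nonneg c), Real.sqrt_sq hc,
    ← Finset.mul_expect]

theorem permL2Average_le_one_add_sum_expect_min {z : ι → ι → ℝ} (hz : ∀ i j, 0 ≤ z i j) :
    permL2Average z ≤ 1 + ∑ i, 𝔼 j, min (z i j) (z i j ^ 2) :=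
  calc permL2Average z
      ≤ 𝔼 π : Equiv.Perm ι, (1 + ∑ i, min (z i (π i)) (z i (π i) ^ 2)) :=
        Finset.expect_le_expect fun π _ =>
          sqrt_sum_sq_le_one_add_sum_min _ fun i _ => hz i (π i)
    _ = 1 + ∑ i, 𝔼 j, min (z i j) (z i j ^ 2) := by
        rw [Finset.expect_add_distrib, Fintype.expect_const,
          expect_perm_sum_apply fun i j => min (z i j) (z i j ^ 2)]

theorem mul_div_sqrt_le_permL2Average {c : ℝ} (hc : 0 ≤ c) (z : ι → ι → ℝ) :
    c * ((∑ i, 𝔼 j, if c ≤ z i j then 1 else 0) /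
      √(1 + 2 * ∑ i, 𝔼 j, if c ≤ z i j then 1 else 0)) ≤ permL2Average z := by
  set T : ι → ι → ℝ := fun i j => if c ≤ z i j then 1 else 0 with hT
  have hT0 : ∀ i j, 0 ≤ T i j := fun i j => by simp only [hT]; split_ifs <;> norm_num
  have hT1 : ∀ i j, T i j ≤ 1 := fun i j => by simp only [hT]; split_ifs <;> norm_num
  have hTz : ∀ i j, c ^ 2 * T i j ≤ z i j ^ 2 := fun i j => by
    by_cases h : c ≤ z i j
    · simpa [hT, h] using pow_le_pow_left₀ hc h 2
    · simpa [hT, h] using sq_nonneg (z i j)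
  calc c * ((∑ i, 𝔼 j, T i j) / √(1 + 2 * ∑ i, 𝔼 j, T i j))
      ≤ c * 𝔼 π : Equiv.Perm ι, √(∑ i, T i (π i)) := by
        gcongr
        exact div_sqrt_le_expect_perm_sqrt_sum_apply hT0 hT1
    _ = 𝔼 π : Equiv.Perm ι, √(∑ i, c ^ 2 * T i (π i)) := by
        simp only [← Finset.mul_sum, Real.sqrt_mul (sq_nonneg c), Real.sqrt_sq hc,
          ← Finset.mul_expect]
    _ ≤ permL2Average z := Finset.expect_le_expect fun π _ =>
        Real.sqrt_le_sqrt (Finset.sum_le_sum fun i _ => hTz i (π i))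

end PermutationAverage

theorem sum_ite_add_one_le_eq_min_floor (n : ℕ) {v : ℝ} (hv : 0 ≤ v) :
    ∑ j : Fin n, (if (j : ℝ) + 1 ≤ v then (1 : ℝ) else 0) = min (n : ℝ) ⌊v⌋₊ := by
  have hfilter : {j ∈ range n | ((j : ℕ) : ℝ) + 1 ≤ v} = range (min n ⌊v⌋₊) := by
    ext j
    have h : (j : ℝ) + 1 ≤ v ↔ j + 1 ≤ ⌊v⌋₊ := by
      rw [Nat.le_floor_iff hv, Nat.cast_add_one]
    simp only [mem_filter, mem_range, h, lt_min_iff, Nat.succ_le_iff]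
  rw [Fin.sum_univ_eq_sum_range (fun j : ℕ => if (j : ℝ) + 1 ≤ v then (1 : ℝ) else 0),
    Finset.sum_boole, hfilter, card_range, Nat.cast_min]

theorem sub_half_le_sum_ite_half_rpow_le {α : ℝ} (hα : 0 ≤ α) {n : ℕ} {u : ℝ} (hu0 : 0 ≤ u)
    (hun : u ≤ n) :
    u - 1 / 2 ≤ ∑ j : Fin n, if (1 / 2 : ℝ) ^ α ≤ (u / (j + 1)) ^ α then (1 : ℝ) else 0 := by
  calc u - 1 / 2
      ≤ min (n : ℝ) ⌊2 * u⌋₊ := by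
        refine le_min (by linarith) ?_
        rcases le_total u (1 / 2) with hu_small | hu_large
        · exact (sub_nonpos.2 hu_small).trans (Nat.cast_nonneg _)
        · linarith [Nat.lt_floor_add_one (2 * u), hu_large]
    _ = ∑ j : Fin n, if (j : ℝ) + 1 ≤ 2 * u then (1 : ℝ) else 0 :=
        (sum_ite_add_one_le_eq_min_floor n (by positivity)).symm
    _ ≤ _ := Finset.sum_le_sum fun j _ => by
        by_cases h : (j : ℝ) + 1 ≤ 2 * u
        · have hle : (1 / 2 : ℝ) ^ α ≤ (u / (j + 1)) ^ α :=
            Real.rpow_le_rpow (by norm_num) ((le_div_iff₀ (by positivity)).2 (by linarith)) hα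
          rw [if_pos h, if_pos hle]
        · rw [if_neg h]
          positivity

section PowerProfile

variable {α : ℝ} {n : ℕ} {u : Fin n → ℝ}

theorem half_rpow_div_four_le_permL2Average (hα : 0 ≤ α) (hn : n ≠ 0) (hu : ∀ i, 0 ≤ u i)
    (hsum : ∑ i, u i = n) :
    (1 / 2 : ℝ) ^ α / 4 ≤ permL2Average fun i j : Fin n => (u i / (j + 1)) ^ α := by
  have hun : ∀ i, u i ≤ n := fun i =>
    hsum ▸ Finset.single_le_sum (fun k _ => hu k) (mem_univ i)
  set S : ℝ := ∑ i, 𝔼 j : Fin n, if (1 / 2 : ℝ) ^ α ≤ (u i / (j + 1)) ^ α then 1 else 0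
  have hS_half : 1 / 2 ≤ S :=
    calc (1 / 2 : ℝ) = ∑ i, (u i - 1 / 2) / n := by
          rw [← Finset.sum_div, Finset.sum_sub_distrib, hsum]
          simp only [sum_const, card_univ, Fintype.card_fin, nsmul_eq_mul]
          field_simp
          ring
      _ ≤ S := Finset.sum_le_sum fun i _ => by
          rw [Fintype.expect_eq_sum_div_card, Fintype.card_fin]
          gcongr
          exact sub_half_le_sum_ite_half_rpow_le hα (hu i) (hun i)
  have hratio : 1 / 4 ≤ S / √(1 + 2 * S) := by
    rw [le_div_iff₀ (Real.sqrt_pos.2 (by linarith))]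
    have : √(1 + 2 * S) ≤ 4 * S := Real.sqrt_le_iff.2 ⟨by linarith, by nlinarith⟩
    linarith
  calc (1 / 2 : ℝ) ^ α / 4 = (1 / 2) ^ α * (1 / 4) := by ring
    _ ≤ (1 / 2) ^ α * (S / √(1 + 2 * S)) := by gcongr
    _ ≤ _ := mul_div_sqrt_le_permL2Average (by positivity) _

theorem permL2Average_le_one_add_integral_Ioi (hα_half : 1 / 2 < α) (hα_one : α < 1)
    (hu : ∀ i, 0 ≤ u i) (hsum : ∑ i, u i = n) :
    permL2Average (fun i j : Fin n => (u i / (j + 1)) ^ α) ≤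
      1 + ∫ s in Set.Ioi (0 : ℝ), min (s ^ (-α)) (s ^ (-(α * 2))) := by
  set C : ℝ := ∫ s in Set.Ioi (0 : ℝ), min (s ^ (-α)) (s ^ (-(α * 2)))
  have hC0 : 0 ≤ C := MeasureTheory.setIntegral_nonneg measurableSet_Ioi
    fun s (hs : 0 < s) => by positivity
  have hw : ∀ i (j : Fin n), 0 ≤ u i / ((j : ℝ) + 1) := fun i j => div_nonneg (hu i) (by positivity)
  have hrow : ∀ i, 𝔼 j : Fin n, min ((u i / (j + 1)) ^ α) (((u i / (j + 1)) ^ α) ^ 2) ≤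
      u i * C / n := fun i => by
    rw [Fintype.expect_eq_sum_div_card, Fintype.card_fin]
    simp only [← Real.rpow_mul_natCast (hw i _), Nat.cast_ofNat]
    gcongr
    exact sum_min_div_rpow_le_mul_integral_Ioi (by linarith) hα_one (by linarith) n (hu i)
  calc permL2Average (fun i j : Fin n => (u i / (j + 1)) ^ α)
      ≤ 1 + ∑ i, 𝔼 j : Fin n, min ((u i / (j + 1)) ^ α) (((u i / (j + 1)) ^ α) ^ 2) :=
        permL2Average_le_one_add_sum_expect_min fun i j => Real.rpow_nonneg (hw i j) α
    _ ≤ 1 + ∑ i, u i * C / n := by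
        gcongr with i
        exact hrow i
    _ = 1 + n * C / n := by rw [← Finset.sum_div, ← Finset.sum_mul, hsum]
    _ ≤ 1 + C := by
        gcongr
        exact div_le_of_le_mul₀ n.cast_nonneg hC0 (mul_comm _ _).le

end PowerProfile

theorem exists_sum_eq_card_and_abs_eq_mul_rpow {ι : Type*} [Fintype ι] {p : ℝ} (hp : 0 < p)
    (x : ι → ℝ) :
    ∃ u : ι → ℝ, (∀ i, 0 ≤ u i) ∧ ∑ i, u i = Fintype.card ι ∧
      ∀ i, |x i| = (∑ k, |x k| ^ p) ^ (1 / p) * (u i / Fintype.card ι) ^ (1 / p) := by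
  have hnonneg : ∀ k, 0 ≤ |x k| ^ p := fun k => by positivity
  have habs : ∀ i, |x i| = (|x i| ^ p) ^ (1 / p) := fun i => by
    rw [one_div, Real.rpow_rpow_inv (abs_nonneg _) hp.ne']
  rcases (Finset.sum_nonneg fun k _ => hnonneg k).eq_or_lt with hR | hR
  · refine ⟨1, fun _ => zero_le_one, by simp, fun i => ?_⟩
    have hi : |x i| ^ p = 0 :=
      (Finset.sum_eq_zero_iff_of_nonneg fun k _ => hnonneg k).1 hR.symm i (mem_univ i)
    rw [habs, hi, ← hR, Real.zero_rpow (one_div_pos.2 hp).ne', zero_mul]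
  · refine ⟨fun i => Fintype.card ι * |x i| ^ p / ∑ k, |x k| ^ p, fun i => by positivity, ?_,
      fun i => ?_⟩
    · rw [← Finset.sum_div, ← Finset.mul_sum, mul_div_cancel_right₀ _ hR.ne']
    · have : Nonempty ι := ⟨i⟩
      rw [← Real.mul_rpow hR.le (by positivity)]
      conv_lhs => rw [habs]
      congr 1
      field_simp

theorem exists_permL2Average_mul_eq {p : ℝ} (hp : 0 < p) {n : ℕ} (x : Fin n → ℝ) :
    ∃ u : Fin n → ℝ, (∀ i, 0 ≤ u i) ∧ ∑ i, u i = n ∧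
      permL2Average (fun i j : Fin n => x i * ((n : ℝ) / (j + 1)) ^ (1 / p)) =
        (∑ i, |x i| ^ p) ^ (1 / p) *
          permL2Average fun i j : Fin n => (u i / (j + 1)) ^ (1 / p) := by
  obtain ⟨u, hu, hsum, hx⟩ := exists_sum_eq_card_and_abs_eq_mul_rpow hp x
  rw [Fintype.card_fin] at hsum hx
  refine ⟨u, hu, hsum, permL2Average_eq_mul_of_abs_eq (by positivity) fun i j => ?_⟩
  have hn : (n : ℝ) ≠ 0 := Nat.cast_ne_zero.2 i.pos.ne'
  have hui := hu i
  rw [abs_mul, hx, mul_assoc, abs_of_nonneg (by positivity), abs_of_nonneg (by positivity),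
    ← Real.mul_rpow (by positivity) (by positivity), div_mul_div_cancel₀ hn]

theorem one_div_factorial_mul_sum_perm_eq_permL2Average {n : ℕ} (x a : Fin n → ℝ) :
    (1 / (n.factorial : ℝ)) * ∑ π : Equiv.Perm (Fin n),
        (∑ i, |x i * a (π i)| ^ (2 : ℝ)) ^ ((1 : ℝ) / 2) =
      permL2Average fun i j => x i * a j := by
  simp only [permL2Average, Fintype.expect_eq_sum_div_card, Fintype.card_perm, Fintype.card_fin,
    Real.rpow_two, sq_abs, ← Real.sqrt_eq_rpow, one_div_mul_eq_div]

theorem stmt_14 (p : ℝ) (hp1 : 1 < p) (hp2 : p < 2) :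
    ∃ c₁ c₂ : ℝ, 0 < c₁ ∧ 0 < c₂ ∧
      ∀ (n : ℕ) (a : Fin n → ℝ),
        (∀ i : Fin n, a i = ((n : ℝ) / ((i : ℕ) + 1)) ^ (1 / p)) →
      ∀ (x : Fin n → ℝ),
        c₁ * (∑ i, |x i| ^ p) ^ (1 / p) ≤
          (1 / (n.factorial : ℝ)) * ∑ π : Equiv.Perm (Fin n),
            (∑ i, |x i * a (π i)| ^ (2 : ℝ)) ^ ((1 : ℝ) / 2) ∧
        (1 / (n.factorial : ℝ)) * ∑ π : Equiv.Perm (Fin n),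
            (∑ i, |x i * a (π i)| ^ (2 : ℝ)) ^ ((1 : ℝ) / 2) ≤
          c₂ * (∑ i, |x i| ^ p) ^ (1 / p) := by
  have hp0 : 0 < p := by linarith
  have hα_half : 1 / 2 < 1 / p := one_div_lt_one_div_of_lt hp0 hp2
  have hα_one : 1 / p < 1 := (div_lt_one hp0).2 hp1
  have hC : 0 ≤ ∫ s in Set.Ioi (0 : ℝ), min (s ^ (-(1 / p))) (s ^ (-(1 / p * 2))) :=
    MeasureTheory.setIntegral_nonneg measurableSet_Ioi fun s (hs : 0 < s) => by positivity
  refine ⟨(1 / 2) ^ (1 / p) / 4, _, by positivity, add_pos_of_pos_of_nonneg one_pos hC,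
    fun n a ha x => ?_⟩
  rcases eq_or_ne n 0 with rfl | hn
  · simp [hp0.ne']
  obtain ⟨u, hu, hsum, hscale⟩ := exists_permL2Average_mul_eq hp0 x
  rw [one_div_factorial_mul_sum_perm_eq_permL2Average, funext ha, hscale,
    mul_comm _ (permL2Average _)]
  constructor <;> gcongr
  · exact half_rpow_div_four_le_permL2Average (by positivity) hn hu hsum
  · exact permL2Average_le_one_add_integral_Ioi hα_half hα_one hu hsum
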